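/- The fractional cost of the adjusted correlation metric f on the negative edges in the ℓ1-norm objective satisfies Σ_{u∈V} Σ_{v∈N_u^-} (1 − f_uv) ≤ 40 · OPT(1). -/

import Mathlib

/-!
Fix a clustering `c`; it suffices to bound the fractional cost of the negative edges by
`(20/3) · ∑ u, disag E c u`.

Let `(u, v)` be a negative edge. If `c u = c v`, the edge is itself a disagreement and its cost
`1 - f_uv` is at most `1`. Otherwise its cost is positive only if `u, v ∉ R₁` and `d_uv ≤ 0.7`, and
then it equals `|N_u^+ ∩ N_v^+| / |N_u^+ ∪ N_v^+|`. A common positive neighbour `w` of `u` and `v`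
cannot share a cluster with both, so `wu` or `wv` is a positive edge cut by `c`. Writing `p_u` for
the number of cut positive edges at `u`, the cost is at most `p_u / Δ_u + p_v / Δ_v`
(`one_sub_adjDist_le`). Since `u ∉ R₁`, the vertex `u` is charged `p_u / Δ_u` by fewer than
`(10/3) Δ_u` edges, hence at most `(10/3) p_u` in total (`sum_charge_le`), and the terms in `v` are
handled by exchanging the roles of the endpoints.
-/

open Finset

noncomputable section

variable {V : Type*} [Fintype V] [DecidableEq V]

/-- Positive neighborhood of `u` (including the positive self-loop at `u`). -/
def Nplus (E : V → V → Prop) [DecidableRel E] (u : V) : Finset V :=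
  insert u (Finset.univ.filter fun v => v ≠ u ∧ E u v)

/-- Negative neighborhood of `u`. -/
def Nminus (E : V → V → Prop) [DecidableRel E] (u : V) : Finset V :=
  Finset.univ.filter fun v => v ≠ u ∧ ¬ E u v

/-- The correlation metric `d`. -/
def corrDist (E : V → V → Prop) [DecidableRel E] (u v : V) : ℝ :=
  if u = v then 0
  else 1 - ((Nplus E u ∩ Nplus E v).card : ℝ) / ((Nplus E u ∪ Nplus E v).card : ℝ)

/-- The set `R₁` of vertices `u` with `|N_u^- ∩ {v : d_uv ≤ 0.7}| ≥ (10/3)·Δ_u`. -/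
def R1set (E : V → V → Prop) [DecidableRel E] : Finset V :=
  Finset.univ.filter fun u =>
    (10 / 3 : ℝ) * (Nplus E u).card ≤ ((Nminus E u).filter fun v => corrDist E u v ≤ 0.7).card

/-- The adjusted correlation metric `f`: start from `d`, round negative edges with
`d > 0.7` up to `1`, and set `f_uv = 1` for all `v ≠ u` whenever `u ∈ R₁`. -/
def adjDist (E : V → V → Prop) [DecidableRel E] (u v : V) : ℝ :=
  if u = v then 0
  else if u ∈ R1set E ∨ v ∈ R1set E then 1
  else if ¬ E u v ∧ 0.7 < corrDist E u v then 1
  else corrDist E u v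

/-- A clustering is encoded by a map `c : V → V`; the cluster `C(u)` is the fiber of `c` at `u`. -/
def clusterOf (c : V → V) (u : V) : Finset V :=
  Finset.univ.filter fun w => c w = c u

/-- The number of disagreements incident to `u` with respect to the clustering `c`. -/
def disag (E : V → V → Prop) [DecidableRel E] (c : V → V) (u : V) : ℕ :=
  (Finset.univ.filter fun v =>
    v ≠ u ∧ ((E u v ∧ c u ≠ c v) ∨ (¬ E u v ∧ c u = c v))).card

/-- `OPT(1)`: the minimum total number of disagreements over all clusterings. -/
def OPT1 (E : V → V → Prop) [DecidableRel E] : ℕ :=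
  Finset.univ.inf' ⟨id, Finset.mem_univ id⟩ fun c : V → V => ∑ u, disag E c u

/-- `OPT(p)`: the minimum `ℓ_p`-norm of the disagreement vector over all clusterings. -/
def OPTlp (E : V → V → Prop) [DecidableRel E] (p : ℝ) : ℝ :=
  Finset.univ.inf' ⟨id, Finset.mem_univ id⟩ fun c : V → V =>
    (∑ u, (disag E c u : ℝ) ^ p) ^ (1 / p)

/-- `OPT(∞)`: the minimum `ℓ_∞`-norm of the disagreement vector over all clusterings. -/
def OPTinf (E : V → V → Prop) [DecidableRel E] : ℕ :=
  Finset.univ.inf' ⟨id, Finset.mem_univ id⟩ fun c : V → V => Finset.univ.sup (disag E c)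

/-- The set of bad triangles: triples of distinct vertices spanning exactly two positive
edges and one negative edge. -/
def badTriangles (E : V → V → Prop) [DecidableRel E] : Finset (Finset V) :=
  Finset.univ.filter fun T =>
    ∃ u v w : V, u ≠ v ∧ u ≠ w ∧ v ≠ w ∧ T = {u, v, w} ∧ E u v ∧ E u w ∧ ¬ E v w

/-- The positive edges at `u` that are cut by the clustering `c`, given by their other endpoint. -/
def cutPos (E : V → V → Prop) [DecidableRel E] (c : V → V) (u : V) : Finset V :=
  Finset.univ.filter fun v => v ≠ u ∧ E u v ∧ c u ≠ c v

/-- The negative edges at `u` inside its cluster, given by their other endpoint. -/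
def inNeg (E : V → V → Prop) [DecidableRel E] (c : V → V) (u : V) : Finset V :=
  (Nminus E u).filter fun v => c u = c v

/-- The amount charged to `u` by the edge `(u, v)`: the fraction `p_u / Δ_u` of cut positive edges
at `u`, provided `u ∉ R₁` and `d_uv ≤ 0.7`. -/
def charge (E : V → V → Prop) [DecidableRel E] (c : V → V) (u v : V) : ℝ :=
  if u ∉ R1set E ∧ corrDist E u v ≤ 0.7 then
    ((cutPos E c u).card : ℝ) / ((Nplus E u).card : ℝ) else 0

theorem charge_nonneg (E : V → V → Prop) [DecidableRel E] (c : V → V) (u v : V) :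
    0 ≤ charge E c u v := by
  unfold charge
  split_ifs <;> positivity

theorem corrDist_comm (E : V → V → Prop) [DecidableRel E] (u v : V) :
    corrDist E u v = corrDist E v u := by
  unfold corrDist
  rw [Finset.inter_comm, Finset.union_comm]
  simp only [eq_comm]

theorem corrDist_nonneg (E : V → V → Prop) [DecidableRel E] (u v : V) :
    0 ≤ corrDist E u v := by
  unfold corrDist
  split_ifs
  · exact le_rfl
  · rw [sub_nonneg]
    apply div_le_one_of_le₀ _ (by positivity)
    exact_mod_cast Finset.card_le_card
      (Finset.inter_subset_left.trans Finset.subset_union_left)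

theorem Nplus_card_pos (E : V → V → Prop) [DecidableRel E] (u : V) :
    0 < ((Nplus E u).card : ℝ) := by
  exact_mod_cast Finset.card_pos.mpr ⟨u, by simp [Nplus]⟩

theorem card_inNeg_add_card_cutPos (E : V → V → Prop) [DecidableRel E] (c : V → V) (u : V) :
    (inNeg E c u).card + (cutPos E c u).card = disag E c u := by
  unfold disag
  rw [← Finset.card_union_of_disjoint]
  · congr 1
    ext v
    simp only [inNeg, cutPos, Nminus, Finset.mem_union, Finset.mem_filter, Finset.mem_univ,
      true_and]
    tauto
  · rw [Finset.disjoint_left]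
    intro v h1 h2
    simp only [inNeg, cutPos, Finset.mem_filter] at h1 h2
    exact h2.2.2.2 h1.2

/-- A common positive neighbour of the endpoints of a negative edge between two clusters is
separated by `c` from at least one endpoint. -/
theorem Nplus_inter_subset (E : V → V → Prop) [DecidableRel E]
    (hsymm : ∀ u v, E u v ↔ E v u) (c : V → V) {u v : V} (hvu : v ≠ u) (hE : ¬ E u v)
    (hc : c u ≠ c v) :
    Nplus E u ∩ Nplus E v ⊆ cutPos E c u ∪ cutPos E c v := by
  intro w hw
  have hE' : ¬ E v u := fun h => hE ((hsymm u v).mpr h)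
  simp only [Nplus, cutPos, Finset.mem_inter, Finset.mem_insert, Finset.mem_filter,
    Finset.mem_univ, true_and, Finset.mem_union] at hw ⊢
  grind

/-- The cost of a negative edge is at most `1` inside a cluster, and is otherwise covered by the
charges to its two endpoints. -/
theorem one_sub_adjDist_le (E : V → V → Prop) [DecidableRel E]
    (hsymm : ∀ u v, E u v ↔ E v u) (c : V → V) {u v : V} (hv : v ∈ Nminus E u) :
    1 - adjDist E u v ≤ (if c u = c v then 1 else 0) + (charge E c u v + charge E c v u) := by
  have h1 := charge_nonneg E c u v
  have h2 := charge_nonneg E c v u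
  have hd := corrDist_nonneg E u v
  obtain ⟨hvu, hE⟩ : v ≠ u ∧ ¬ E u v := by simpa [Nminus] using hv
  have h0 : (0 : ℝ) ≤ if c u = c v then 1 else 0 := by split_ifs <;> norm_num
  rw [adjDist, if_neg hvu.symm]
  by_cases hR : u ∈ R1set E ∨ v ∈ R1set E
  · rw [if_pos hR]
    linarith
  rw [if_neg hR]
  by_cases h7 : ¬ E u v ∧ 0.7 < corrDist E u v
  · rw [if_pos h7]
    linarith
  rw [if_neg h7]
  by_cases hc : c u = c v
  · rw [if_pos hc]
    linarith
  · rw [if_neg hc]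
    have h7' : corrDist E u v ≤ 0.7 := not_lt.mp fun h => h7 ⟨hE, h⟩
    push Not at hR
    rw [charge, if_pos ⟨hR.1, h7'⟩, charge, if_pos ⟨hR.2, corrDist_comm E u v ▸ h7'⟩,
      corrDist, if_neg hvu.symm, sub_sub_cancel, zero_add]
    have hsub : ((Nplus E u ∩ Nplus E v).card : ℝ)
        ≤ (cutPos E c u).card + (cutPos E c v).card := by
      exact_mod_cast (Finset.card_le_card (Nplus_inter_subset E hsymm c hvu hE hc)).trans
        (Finset.card_union_le _ _)
    have hu : ((Nplus E u).card : ℝ) ≤ (Nplus E u ∪ Nplus E v).card := by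
      exact_mod_cast Finset.card_le_card Finset.subset_union_left
    have hv' : ((Nplus E v).card : ℝ) ≤ (Nplus E u ∪ Nplus E v).card := by
      exact_mod_cast Finset.card_le_card Finset.subset_union_right
    calc ((Nplus E u ∩ Nplus E v).card : ℝ) / (Nplus E u ∪ Nplus E v).card
        ≤ ((cutPos E c u).card + (cutPos E c v).card : ℝ) / (Nplus E u ∪ Nplus E v).card := by
          gcongr
      _ = ((cutPos E c u).card : ℝ) / (Nplus E u ∪ Nplus E v).card
          + ((cutPos E c v).card : ℝ) / (Nplus E u ∪ Nplus E v).card := add_div _ _ _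
      _ ≤ _ := add_le_add
          (div_le_div_of_nonneg_left (by positivity) (Nplus_card_pos E u) hu)
          (div_le_div_of_nonneg_left (by positivity) (Nplus_card_pos E v) hv')

/-- A vertex outside `R₁` has few negative edges with `d ≤ 0.7`, which bounds its total charge. -/
theorem sum_charge_le (E : V → V → Prop) [DecidableRel E] (c : V → V) (u : V) :
    ∑ v ∈ Nminus E u, charge E c u v ≤ (10 / 3 : ℝ) * (cutPos E c u).card := by
  by_cases hu : u ∈ R1set E
  · simp only [charge, hu, not_true_eq_false, false_and, if_false, Finset.sum_const_zero]
    positivity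
  · have hcard : (((Nminus E u).filter fun v => corrDist E u v ≤ 0.7).card : ℝ)
        ≤ (10 / 3 : ℝ) * (Nplus E u).card := by
      have h := hu
      simp only [R1set, Finset.mem_filter, Finset.mem_univ, true_and, not_le] at h
      exact h.le
    simp only [charge, hu, not_false_eq_true, true_and]
    rw [← Finset.sum_filter, Finset.sum_const, nsmul_eq_mul]
    have hpos := Nplus_card_pos E u
    rw [mul_div_assoc', div_le_iff₀ hpos]
    nlinarith [mul_le_mul_of_nonneg_right hcard (Nat.cast_nonneg (α := ℝ) (cutPos E c u).card)]

/-- Summing over negative edges is invariant under exchanging the endpoints. -/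
theorem sum_Nminus_comm (E : V → V → Prop) [DecidableRel E]
    (hsymm : ∀ u v, E u v ↔ E v u) (g : V → V → ℝ) :
    ∑ u, ∑ v ∈ Nminus E u, g v u = ∑ u, ∑ v ∈ Nminus E u, g u v := by
  refine Finset.sum_comm' fun u v => ?_
  simp [Nminus, hsymm u v, eq_comm]

theorem sum_one_sub_adjDist_le (E : V → V → Prop) [DecidableRel E]
    (hsymm : ∀ u v, E u v ↔ E v u) (c : V → V) :
    ∑ u, ∑ v ∈ Nminus E u, (1 - adjDist E u v) ≤ (20 / 3 : ℝ) * ∑ u, (disag E c u : ℝ) := by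
  calc ∑ u, ∑ v ∈ Nminus E u, (1 - adjDist E u v)
      ≤ ∑ u, ∑ v ∈ Nminus E u,
          ((if c u = c v then 1 else 0) + (charge E c u v + charge E c v u)) :=
        Finset.sum_le_sum fun u _ => Finset.sum_le_sum fun v hv =>
          one_sub_adjDist_le E hsymm c hv
    _ = ∑ u, (((inNeg E c u).card : ℝ) + 2 * ∑ v ∈ Nminus E u, charge E c u v) := by
        simp only [Finset.sum_add_distrib]
        rw [sum_Nminus_comm E hsymm (charge E c), ← Finset.mul_sum, two_mul]
        simp [inNeg]
    _ ≤ ∑ u, (20 / 3 : ℝ) * (disag E c u : ℝ) := by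
        refine Finset.sum_le_sum fun u _ => ?_
        have h1 := sum_charge_le E c u
        have h2 : ((inNeg E c u).card : ℝ) + (cutPos E c u).card = disag E c u := by
          exact_mod_cast card_inNeg_add_card_cutPos E c u
        have h3 : (0 : ℝ) ≤ (inNeg E c u).card := Nat.cast_nonneg _
        linarith
    _ = _ := (Finset.mul_sum _ _ _).symm

/-- the fractional cost of the adjusted correlation metric on the negative
edges in the `ℓ_1`-norm objective is at most `40 · OPT(1)`. -/
theorem l1_frac_cost_neg (E : V → V → Prop) [DecidableRel E]
    (hsymm : ∀ u v, E u v ↔ E v u) :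
    ∑ u, ∑ v ∈ Nminus E u, (1 - adjDist E u v) ≤ 40 * (OPT1 E : ℝ) := by
  obtain ⟨c, -, hc⟩ := Finset.exists_mem_eq_inf' (s := (Finset.univ : Finset (V → V)))
    ⟨id, Finset.mem_univ id⟩ fun c : V → V => ∑ u, disag E c u
  have hopt : (OPT1 E : ℝ) = ∑ u, (disag E c u : ℝ) := by
    unfold OPT1
    rw [hc]
    push_cast
    rfl
  have h := sum_one_sub_adjDist_le E hsymm c
  rw [← hopt] at h
  have h0 : (0 : ℝ) ≤ OPT1 E := Nat.cast_nonneg _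
  linarith
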